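/- Let (P, ≤, δ) ∈ ℙ, let T be a tame expansion of T_P, and let M ⊨ T. Let E_P be the equivalence relation on M defined by E_P(a,b) iff E_p(a,b) for all p ∈ P, and let N = M/E_P be the quotient structure (all relations of T's language are E_P-invariant, hence well-defined on classes), expanded by the coloring c given by c([a]) = 0 if the class [a]_{E_P} is infinite and c([a]) = |[a]_{E_P}| + 1 otherwise (colors realized as countably many unary predicates). Then for every ordinal α < ω₁ and all tuples ā = (a_i : i < n), b̄ = (b_i : i < n) from M: (i) if the a_i are pairwise distinct, the b_i are pairwise distinct, and (N, [ā]_{E_P}) ≡_α (N, [b̄]_{E_P}), then (M, ā) ≡_α (M, b̄); and (ii) if (M, ā) ≡_{ω+α} (M, b̄), then (N, [ā]_{E_P}) ≡_α (N, [b̄]_{E_P}). -/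

import Mathlib

open FirstOrder

universe u v w

namespace ScottTools

variable (L : FirstOrder.Language.{u, v}) (M : Type w) (N : Type w) [L.Structure M] [L.Structure N]

/-- Two tuples (of the same length) have the same quantifier-free type. -/
def QFEquiv {n : ℕ} (a : Fin n → M) (b : Fin n → N) : Prop :=
  ∀ φ : L.Formula (Fin n), φ.IsQF → (φ.Realize a ↔ φ.Realize b)

/-- The ordinal-indexed back-and-forth equivalence `(M, ā) ≡_α (N, b̄)`:
`≡₀` is equality of quantifier-free types, `≡_{α+1}` is the back-and-forth condition
with respect to `≡_α`, and limit stages are intersections. -/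
def BFEquiv : Ordinal.{w} → (n : ℕ) → (Fin n → M) → (Fin n → N) → Prop
  | α, n, a, b =>
    QFEquiv L M N a b ∧
    ∀ β : Ordinal.{w}, β < α →
      (∀ x : M, ∃ y : N, BFEquiv β (n + 1) (Fin.snoc a x) (Fin.snoc b y)) ∧
      (∀ y : N, ∃ x : M, BFEquiv β (n + 1) (Fin.snoc a x) (Fin.snoc b y))
  termination_by α => α

/-- `(M, ā) ≡_∞ (N, b̄)`: back-and-forth equivalent for all ordinals. -/
def BFEquivInf (n : ℕ) (a : Fin n → M) (b : Fin n → N) : Prop :=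
  ∀ α : Ordinal.{w}, BFEquiv L M N α n a b

/-- The Scott rank of a structure: the least ordinal `α` such that any two finite tuples
that are `≡_α`-equivalent are `≡_∞`-equivalent. -/
noncomputable def ScottRank : Ordinal.{w} :=
  sInf {α : Ordinal.{w} | ∀ (n : ℕ) (a b : Fin n → M),
    BFEquiv L M M α n a b → BFEquivInf L M M n a b}

/-- `B` is a base for `M`: distinct elements of `M` have distinct complete first-order
types over `B`. -/
def IsBase (B : Set M) : Prop :=
  ∀ a b : M,
    (∀ (k : ℕ) (p : Fin k → M), (∀ i, p i ∈ B) →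
      ∀ φ : L.Formula (Fin (k + 1)),
        (φ.Realize (Fin.snoc p a) ↔ φ.Realize (Fin.snoc p b))) →
    a = b

end ScottTools

namespace TameQuot

open FirstOrder

/-- A purely relational language, with relation symbols `Rs k` of arity `k`. -/
def relLang (Rs : ℕ → Type) : FirstOrder.Language :=
  ⟨fun _ => Empty, Rs⟩

/-- The interpretation of the designated binary symbol `E p`. -/
def RelE {Rs : ℕ → Type} {M : Type} [(relLang Rs).Structure M] {P : Type}
    (E : P → Rs 2) (p : P) (a b : M) : Prop :=
  Language.Structure.RelMap (L := relLang Rs) (E p : (relLang Rs).Relations 2) ![a, b]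

/-- `M` satisfies the axioms of `T_P` with respect to the designated symbols `E p`. -/
def ModelsTP {P : Type} (le : P → P → Prop) (δ : P → ℕ) {Rs : ℕ → Type} (E : P → Rs 2)
    (M : Type) [(relLang Rs).Structure M] : Prop :=
  (∀ p : P, Equivalence (fun a b : M => RelE E p a b)) ∧
  (∀ p q : P, le p q → ∀ a b : M, RelE E q a b → RelE E p a b) ∧
  (∀ (q : P) (a : M), ∃ f : Fin (δ q) → M,
      (∀ (i : Fin (δ q)) (p : P), le p q → p ≠ q → RelE E p (f i) a) ∧
      (∀ i j : Fin (δ q), i ≠ j → ¬ RelE E q (f i) (f j)) ∧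
      (∀ b : M, (∀ p : P, le p q → p ≠ q → RelE E p b a) → ∃ i, RelE E q b (f i))) ∧
  (∀ Q : Finset P, (∀ p q : P, le p q → q ∈ Q → p ∈ Q) →
      ∀ a : P → M, (∀ p q : P, p ∈ Q → q ∈ Q → le p q → RelE E p (a p) (a q)) →
      ∃ z : M, ∀ q ∈ Q, RelE E q z (a q))

/-- The relation `E_P`: equivalence for every `p ∈ P`. -/
def EP {Rs : ℕ → Type} {M : Type} [(relLang Rs).Structure M] {P : Type}
    (E : P → Rs 2) (a b : M) : Prop :=
  ∀ p : P, RelE E p a b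

/-- The language of the quotient: the original relational language together with
countably many unary predicates (the colors). -/
def qLang (Rs : ℕ → Type) : FirstOrder.Language :=
  ⟨fun _ => Empty, fun k => Rs k ⊕ (PLift (k = 1) × ℕ)⟩

/-- The color of an `E_P`-class: `0` if the class is infinite, and (number of
elements) `+ 1` otherwise. -/
noncomputable def colorOf {M : Type} (r : M → M → Prop) (q : Quot r) : ℕ := by
  classical exact
    if ({b : M | Quot.mk r b = q}).Finite then ({b : M | Quot.mk r b = q}).ncard + 1 else 0

/-- The quotient structure `M/E_P`, expanded by the coloring predicates. -/
noncomputable def qStr (Rs : ℕ → Type) (M : Type) [(relLang Rs).Structure M]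
    (r : M → M → Prop) : (qLang Rs).Structure (Quot r) where
  funMap := fun f _ => f.elim
  RelMap := fun {k} R x =>
    match R with
    | Sum.inl R0 => ∃ a : Fin k → M, (∀ i, Quot.mk r (a i) = x i) ∧
        Language.Structure.RelMap (L := relLang Rs) (R0 : (relLang Rs).Relations k) a
    | Sum.inr ⟨h, c⟩ => colorOf r (x (Fin.cast h.down.symm 0)) = c

end TameQuot

open ScottTools TameQuot FirstOrder

/-!
For (i), `≡₀` in the coloured quotient says that the two tuples satisfy the same relations and that
matching classes have the same number of elements. If back-and-forth in `M / E_P` answers `[x]` by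
`[y₀]`, the classes of `x` and `y₀` have equal size and contain the same entries of the tuples, so
`[y₀]` has a fresh element precisely when `[x]` does: the answer lifts to an element of `[y₀]`.

For (ii), each symbol `E_p` belongs to the language, so quantifier-free types determine the relation
`E_P` between entries. Playing `m` distinct elements of the class of `a_i` therefore forces `m`
distinct elements of the class of `b_i`; `≡_ω` allows every finite `m`, so it preserves the colours,
and answers in `M` project to the quotient.
-/

namespace TameQuot

section Sets

variable {ι X Y : Type*}

theorem encard_image_eq_of_eq_iff_eq {f : ι → X} {g : ι → Y}
    (hfg : ∀ i j, f i = f j ↔ g i = g j) (s : Set ι) : (f '' s).encard = (g '' s).encard := by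
  obtain ⟨t, hts, hft⟩ := Set.exists_subset_bijOn s f
  have hgt : Set.InjOn g t := fun i hi j hj hij => hft.injOn hi hj ((hfg i j).2 hij)
  have hgts : g '' t = g '' s := by
    refine (Set.image_mono hts).antisymm ?_
    rintro _ ⟨i, hi, rfl⟩
    obtain ⟨j, hj, hji⟩ := hft.surjOn (Set.mem_image_of_mem f hi)
    exact ⟨j, hj, (hfg j i).1 hji⟩
  rw [← hft.image_eq, hft.injOn.encard_image, ← hgts, hgt.encard_image]

theorem exists_mem_forall_eq_iff_eq [Finite ι] {f : ι → X} {g : ι → Y}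
    (hfg : ∀ i j, f i = f j ↔ g i = g j) {A : Set X} {B : Set Y} (hAB : A.encard = B.encard)
    (hmem : ∀ i, f i ∈ A ↔ g i ∈ B) {x : X} (hx : x ∈ A) :
    ∃ y ∈ B, ∀ i, f i = x ↔ g i = y := by
  by_cases hxf : x ∈ Set.range f
  · obtain ⟨i, rfl⟩ := hxf
    exact ⟨g i, (hmem i).1 hx, fun j => hfg j i⟩
  suffices ∃ y ∈ B, y ∉ Set.range g by
    obtain ⟨y, hyB, hyg⟩ := this
    exact ⟨y, hyB, fun i => iff_of_false (fun h => hxf ⟨i, h⟩) (fun h => hyg ⟨i, h⟩)⟩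
  by_contra! hBg
  have hcard : A.encard ≤ (f '' (f ⁻¹' A)).encard := by
    rw [encard_image_eq_of_eq_iff_eq hfg, show f ⁻¹' A = g ⁻¹' B from Set.ext hmem,
      Set.image_preimage_eq_of_subset hBg, hAB]
  have hA : f '' (f ⁻¹' A) = A :=
    (Set.toFinite _).eq_of_subset_of_encard_le (Set.image_preimage_subset f A) hcard
  exact hxf (Set.image_subset_range _ _ (hA.symm ▸ hx))

theorem natCast_le_encard_iff {s : Set X} {m : ℕ} :
    (m : ℕ∞) ≤ s.encard ↔ ∃ c : Fin m → X, Function.Injective c ∧ ∀ i, c i ∈ s := by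
  constructor
  · intro hm
    obtain ⟨t, hts, htm⟩ := Set.exists_subset_encard_eq hm
    lift t to Finset X using Set.finite_of_encard_eq_coe htm
    rw [Set.encard_coe_eq_coe_finsetCard, Nat.cast_inj] at htm
    let e := t.equivFinOfCardEq htm
    exact ⟨fun i => e.symm i, Subtype.val_injective.comp e.symm.injective,
      fun i => hts (e.symm i).2⟩
  · rintro ⟨c, hc, hcs⟩
    simpa using hc.encard_range.trans (Set.encard_le_encard (Set.range_subset_iff.2 hcs))

theorem snoc_apply_eq_iff {n : ℕ} {a : Fin n → X} {b : Fin n → Y}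
    (hab : ∀ i j, a i = a j ↔ b i = b j) {x : X} {y : Y} (hxy : ∀ i, a i = x ↔ b i = y) :
    ∀ i j, (Fin.snoc a x : Fin (n + 1) → X) i = (Fin.snoc a x : Fin (n + 1) → X) j ↔
      (Fin.snoc b y : Fin (n + 1) → Y) i = (Fin.snoc b y : Fin (n + 1) → Y) j := by
  simp only [Fin.forall_fin_succ', Fin.snoc_castSucc, Fin.snoc_last]
  exact ⟨fun i => ⟨hab i, hxy i⟩, fun j => by rw [eq_comm, hxy j, eq_comm], trivial⟩

end Sets

end TameQuot

namespace ScottTools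

section QuantifierFree

variable {L : FirstOrder.Language.{u, v}} {M N : Type w} [L.Structure M] [L.Structure N]

variable (L) in
/-- The two tuples satisfy the same relation symbols; equality between entries is not compared. -/
def RelEquiv {n : ℕ} (a : Fin n → M) (b : Fin n → N) : Prop :=
  ∀ (k : ℕ) (R : L.Relations k) (f : Fin k → Fin n),
    Language.Structure.RelMap R (a ∘ f) ↔ Language.Structure.RelMap R (b ∘ f)

variable {n : ℕ} {a : Fin n → M} {b : Fin n → N}

theorem QFEquiv.symm (h : QFEquiv L M N a b) : QFEquiv L N M b a :=
  fun φ hφ => (h φ hφ).symm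

theorem QFEquiv.eq_iff_eq (h : QFEquiv L M N a b) (i j : Fin n) : a i = a j ↔ b i = b j := by
  simpa [Language.Formula.Realize] using
    h (Language.Term.bdEqual (n := 0) (.var (.inl i)) (.var (.inl j)))
      (.of_isAtomic (.equal _ _))

theorem QFEquiv.relEquiv (h : QFEquiv L M N a b) : RelEquiv L a b := fun k R f => by
  simpa [Language.Formula.Realize, Language.BoundedFormula.realize_rel, Function.comp_def] using
    h (R.boundedFormula (l := 0) fun i => .var (.inl (f i))) (.of_isAtomic (.rel _ _))

theorem exists_eq_var_of_isRelational [L.IsRelational] {ι : Type*} (t : L.Term (ι ⊕ Fin 0)) :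
    ∃ i : ι, t = .var (.inl i) :=
  match t with
  | .var (.inl i) => ⟨i, rfl⟩
  | .var (.inr i) => i.elim0
  | .func f _ => isEmptyElim f

theorem RelEquiv.qfEquiv [L.IsRelational] (hrel : RelEquiv L a b)
    (heq : ∀ i j, a i = a j ↔ b i = b j) : QFEquiv L M N a b := by
  intro φ hφ
  unfold Language.Formula at φ
  unfold Language.Formula.Realize
  induction hφ with
  | falsum => rfl
  | of_isAtomic h =>
    cases h with
    | equal t₁ t₂ =>
      obtain ⟨i, rfl⟩ := exists_eq_var_of_isRelational t₁
      obtain ⟨j, rfl⟩ := exists_eq_var_of_isRelational t₂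
      simpa using heq i j
    | rel R ts =>
      choose f hf using fun i => exists_eq_var_of_isRelational (ts i)
      simpa [Language.BoundedFormula.realize_rel, hf, Function.comp_def] using hrel _ R f
  | imp _ _ ih₁ ih₂ => simp only [Language.BoundedFormula.realize_imp, ih₁, ih₂]

end QuantifierFree

namespace BFEquiv

variable {L : FirstOrder.Language.{u, v}} {M N : Type w} [L.Structure M] [L.Structure N]
  {α β : Ordinal.{w}} {n : ℕ} {a : Fin n → M} {b : Fin n → N}

theorem qfEquiv (h : BFEquiv L M N α n a b) : QFEquiv L M N a b := by
  rw [BFEquiv] at h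
  exact h.1

theorem forth (h : BFEquiv L M N α n a b) (hβ : β < α) (x : M) :
    ∃ y, BFEquiv L M N β (n + 1) (Fin.snoc a x) (Fin.snoc b y) := by
  rw [BFEquiv] at h
  exact (h.2 β hβ).1 x

theorem back (h : BFEquiv L M N α n a b) (hβ : β < α) (y : N) :
    ∃ x, BFEquiv L M N β (n + 1) (Fin.snoc a x) (Fin.snoc b y) := by
  rw [BFEquiv] at h
  exact (h.2 β hβ).2 y

theorem mono (h : BFEquiv L M N α n a b) (hβ : β ≤ α) : BFEquiv L M N β n a b := by
  rw [BFEquiv]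
  exact ⟨h.qfEquiv, fun γ hγ => ⟨h.forth (hγ.trans_le hβ), h.back (hγ.trans_le hβ)⟩⟩

theorem symm (h : BFEquiv L M N α n a b) : BFEquiv L N M α n b a := by
  induction α using WellFoundedLT.induction generalizing n with
  | ind α ih =>
    rw [BFEquiv]
    exact ⟨h.qfEquiv.symm, fun γ hγ =>
      ⟨fun y => (h.back hγ y).imp fun _ => ih γ hγ, fun x => (h.forth hγ x).imp fun _ => ih γ hγ⟩⟩

theorem exists_append {m : ℕ} (h : BFEquiv L M N (β + m) n a b) (c : Fin m → M) :
    ∃ d : Fin m → N, BFEquiv L M N β (n + m) (Fin.append a c) (Fin.append b d) := by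
  induction m generalizing β with
  | zero => exact ⟨Fin.elim0, by simpa [Fin.append_right_nil _ c rfl] using h⟩
  | succ m ih =>
    have h' : BFEquiv L M N (β + 1 + m) n a b := by
      rwa [add_assoc, ← Nat.cast_one, ← Nat.cast_add, add_comm 1 m]
    obtain ⟨d, hd⟩ := ih h' (Fin.init c)
    obtain ⟨y, hy⟩ := hd.forth (lt_add_one β) (c (Fin.last m))
    refine ⟨Fin.snoc d y, ?_⟩
    rwa [← Fin.snoc_init_self c, Fin.append_snoc, Fin.append_snoc]

end BFEquiv

end ScottTools

namespace TameQuot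

instance (Rs : ℕ → Type) : (relLang Rs).IsRelational :=
  fun _ => inferInstanceAs (IsEmpty Empty)

instance (Rs : ℕ → Type) : (qLang Rs).IsRelational :=
  fun _ => inferInstanceAs (IsEmpty Empty)

theorem colorOf_eq_colorOf_iff {M N : Type} {r : M → M → Prop} {s : N → N → Prop}
    (p : Quot r) (q : Quot s) :
    colorOf r p = colorOf s q ↔
      (Quot.mk r ⁻¹' {p}).encard = (Quot.mk s ⁻¹' {q}).encard := by
  classical
  change (if (Quot.mk r ⁻¹' {p}).Finite then (Quot.mk r ⁻¹' {p}).ncard + 1 else 0) =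
    (if (Quot.mk s ⁻¹' {q}).Finite then (Quot.mk s ⁻¹' {q}).ncard + 1 else 0) ↔ _
  split_ifs with hp hq hq
  · rw [← hp.cast_ncard_eq, ← hq.cast_ncard_eq, Nat.cast_inj, Nat.add_right_cancel_iff]
  · simpa [Set.Infinite.encard_eq hq] using hp
  · simpa [Set.Infinite.encard_eq hp, eq_comm] using hq
  · simp [Set.Infinite.encard_eq hp, Set.Infinite.encard_eq hq]

section Quotient

variable {P : Type} {Rs : ℕ → Type} (E : P → Rs 2)
  {M N : Type} [(relLang Rs).Structure M] [(relLang Rs).Structure N]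

variable (M) in
/-- `E_P` is a congruence of `M`: an equivalence relation under which every relation of the
language is invariant, so that the relations descend to the quotient `M / E_P`. -/
structure IsCongruence : Prop where
  equivalence : Equivalence (EP E (M := M))
  relMap_iff {k : ℕ} (R : (relLang Rs).Relations k) {x y : Fin k → M}
    (hxy : ∀ i, EP E (x i) (y i)) :
    Language.Structure.RelMap R x ↔ Language.Structure.RelMap R y

variable (M) in
/-- The quotient `M / E_P`, carrying the coloured structure `qStr`. It is reducible to the `Quot`
on which `qStr` is defined. -/
abbrev EPQuot : Type := Quot (EP E (M := M))

noncomputable instance : (qLang Rs).Structure (EPQuot E M) := qStr Rs M (EP E)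

theorem ep_iff_of_relEquiv {n : ℕ} {a : Fin n → M} {b : Fin n → N}
    (h : RelEquiv (relLang Rs) a b) (i j : Fin n) :
    EP E (a i) (a j) ↔ EP E (b i) (b j) := by
  refine forall_congr' fun p => ?_
  have hp := h 2 (E p) ![i, j]
  rw [← FinVec.map_eq, ← FinVec.map_eq] at hp
  exact hp

variable {E}

namespace IsCongruence

theorem mk_eq_mk_iff (hM : IsCongruence E M) {x y : M} :
    Quot.mk (EP E) x = Quot.mk (EP E) y ↔ EP E x y :=
  hM.equivalence.quot_mk_eq_iff x y

theorem relMap_mk_iff (hM : IsCongruence E M) {k : ℕ} (R : Rs k) (x : Fin k → M) :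
    Language.Structure.RelMap (L := qLang Rs) (.inl R : (qLang Rs).Relations k)
        (Quot.mk (EP E) ∘ x) ↔
      Language.Structure.RelMap (L := relLang Rs) (R : (relLang Rs).Relations k) x :=
  ⟨fun ⟨_, hy, hRy⟩ => (hM.relMap_iff R fun i => hM.mk_eq_mk_iff.1 (hy i)).1 hRy,
    fun hRx => ⟨x, fun _ => rfl, hRx⟩⟩

variable {n : ℕ} {a : Fin n → M} {b : Fin n → N}

theorem qfEquiv_mk_iff (hM : IsCongruence E M) (hN : IsCongruence E N) :
    QFEquiv (qLang Rs) (EPQuot E M) (EPQuot E N) (Quot.mk _ ∘ a) (Quot.mk _ ∘ b) ↔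
      RelEquiv (relLang Rs) a b ∧
        ∀ i, colorOf (EP E) (Quot.mk _ (a i)) = colorOf (EP E) (Quot.mk _ (b i)) := by
  constructor
  · intro h
    refine ⟨fun k R f => ?_, fun i => ?_⟩
    · exact (hM.relMap_mk_iff R _).symm.trans
        ((h.relEquiv k (.inl R) f).trans (hN.relMap_mk_iff R _))
    · exact ((h.relEquiv 1 (.inr ⟨⟨rfl⟩, colorOf (EP E) (Quot.mk _ (a i))⟩) fun _ => i).1 rfl).symm
  · rintro ⟨hrel, hcolor⟩
    refine RelEquiv.qfEquiv ?_ fun i j => ?_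
    · rintro k (R | ⟨⟨rfl⟩, c⟩) f
      · exact (hM.relMap_mk_iff R _).trans ((hrel k R f).trans (hN.relMap_mk_iff R _).symm)
      · exact Eq.congr_left (hcolor _)
    · exact hM.mk_eq_mk_iff.trans ((ep_iff_of_relEquiv E hrel i j).trans hN.mk_eq_mk_iff.symm)

theorem exists_mk_eq_forall_eq_iff_eq (hM : IsCongruence E M) (hN : IsCongruence E N)
    (hab : ∀ i j, a i = a j ↔ b i = b j) {x : M} {y₀ : N}
    (h : QFEquiv (qLang Rs) (EPQuot E M) (EPQuot E N)
      (Quot.mk _ ∘ (Fin.snoc a x : Fin (n + 1) → M))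
      (Quot.mk _ ∘ (Fin.snoc b y₀ : Fin (n + 1) → N))) :
    ∃ y, Quot.mk (EP E) y = Quot.mk (EP E) y₀ ∧ ∀ i, a i = x ↔ b i = y := by
  obtain ⟨-, hcolor⟩ := (qfEquiv_mk_iff hM hN).1 h
  have hcard : (Quot.mk (EP E) ⁻¹' {Quot.mk (EP E) x}).encard =
      (Quot.mk (EP E) ⁻¹' {Quot.mk (EP E) y₀}).encard := by
    simpa [colorOf_eq_colorOf_iff] using hcolor (Fin.last n)
  have hmem : ∀ i, a i ∈ Quot.mk (EP E) ⁻¹' {Quot.mk (EP E) x} ↔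
      b i ∈ Quot.mk (EP E) ⁻¹' {Quot.mk (EP E) y₀} := fun i => by
    simpa using h.eq_iff_eq i.castSucc (Fin.last n)
  exact exists_mem_forall_eq_iff_eq hab hcard hmem rfl

theorem bfEquiv_of_bfEquiv_mk (hM : IsCongruence E M) (hN : IsCongruence E N) {α : Ordinal.{0}}
    (hab : ∀ i j, a i = a j ↔ b i = b j)
    (h : BFEquiv (qLang Rs) (EPQuot E M) (EPQuot E N) α n (Quot.mk _ ∘ a) (Quot.mk _ ∘ b)) :
    BFEquiv (relLang Rs) M N α n a b := by
  induction α using WellFoundedLT.induction generalizing n with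
  | ind α ih =>
    rw [BFEquiv]
    refine ⟨((qfEquiv_mk_iff hM hN).1 h.qfEquiv).1.qfEquiv hab,
      fun γ hγ => ⟨fun x => ?_, fun y => ?_⟩⟩
    · obtain ⟨⟨y₀⟩, hy₀⟩ := h.forth hγ (Quot.mk _ x)
      rw [← Fin.comp_snoc, ← Fin.comp_snoc] at hy₀
      obtain ⟨y, hy, hxy⟩ := exists_mk_eq_forall_eq_iff_eq hM hN hab hy₀.qfEquiv
      refine ⟨y, ih γ hγ (snoc_apply_eq_iff hab hxy) ?_⟩
      rwa [Fin.comp_snoc _ b, hy, ← Fin.comp_snoc]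
    · obtain ⟨⟨x₀⟩, hx₀⟩ := h.back hγ (Quot.mk _ y)
      rw [← Fin.comp_snoc, ← Fin.comp_snoc] at hx₀
      obtain ⟨x, hx, hyx⟩ := exists_mk_eq_forall_eq_iff_eq hN hM (fun i j => (hab i j).symm)
        hx₀.qfEquiv.symm
      refine ⟨x, ih γ hγ (snoc_apply_eq_iff hab fun i => (hyx i).symm) ?_⟩
      rwa [Fin.comp_snoc _ a, hx, ← Fin.comp_snoc]

theorem encard_class_le (hM : IsCongruence E M) (hN : IsCongruence E N)
    (h : BFEquiv (relLang Rs) M N Ordinal.omega0 n a b) (i : Fin n) :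
    (Quot.mk (EP E) ⁻¹' {Quot.mk (EP E) (a i)}).encard ≤
      (Quot.mk (EP E) ⁻¹' {Quot.mk (EP E) (b i)}).encard := by
  rw [← ENat.forall_natCast_le_iff_le]
  intro m hm
  obtain ⟨c, hc, hca⟩ := natCast_le_encard_iff.1 hm
  have h_rounds : BFEquiv (relLang Rs) M N (0 + m) n a b :=
    h.mono (by rw [zero_add]; exact (Ordinal.natCast_lt_omega0 m).le)
  obtain ⟨d, hd⟩ := h_rounds.exists_append c
  refine natCast_le_encard_iff.2 ⟨d, fun j k hjk => hc ?_, fun j => hN.mk_eq_mk_iff.2 ?_⟩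
  · simpa [hjk] using hd.qfEquiv.eq_iff_eq (Fin.natAdd n j) (Fin.natAdd n k)
  · have hdb := ep_iff_of_relEquiv E hd.qfEquiv.relEquiv (Fin.natAdd n j) (Fin.castAdd m i)
    rw [Fin.append_right, Fin.append_left, Fin.append_right, Fin.append_left] at hdb
    exact hdb.1 (hM.mk_eq_mk_iff.1 (hca j))

theorem bfEquiv_mk_of_bfEquiv_omega0_add (hM : IsCongruence E M) (hN : IsCongruence E N)
    {α : Ordinal.{0}} (h : BFEquiv (relLang Rs) M N (Ordinal.omega0 + α) n a b) :
    BFEquiv (qLang Rs) (EPQuot E M) (EPQuot E N) α n (Quot.mk _ ∘ a) (Quot.mk _ ∘ b) := by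
  induction α using WellFoundedLT.induction generalizing n with
  | ind α ih =>
    have hω : BFEquiv (relLang Rs) M N Ordinal.omega0 n a b := h.mono le_self_add
    rw [BFEquiv]
    refine ⟨(qfEquiv_mk_iff hM hN).2 ⟨h.qfEquiv.relEquiv, fun i => ?_⟩, fun γ hγ => ?_⟩
    · rw [colorOf_eq_colorOf_iff]
      exact (encard_class_le hM hN hω i).antisymm (encard_class_le hN hM hω.symm i)
    have hγ' : Ordinal.omega0 + γ < Ordinal.omega0 + α := by gcongr
    constructor
    · rintro ⟨x⟩
      obtain ⟨y, hy⟩ := h.forth hγ' x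
      exact ⟨Quot.mk _ y, by simpa only [Fin.comp_snoc] using ih γ hγ hy⟩
    · rintro ⟨y⟩
      obtain ⟨x, hx⟩ := h.back hγ' y
      exact ⟨Quot.mk _ x, by simpa only [Fin.comp_snoc] using ih γ hγ hx⟩

end IsCongruence

theorem isCongruence_of_tame (hE : ∀ p, Equivalence fun x y : M => RelE E p x y)
    (htame : ∀ (k : ℕ) (R : Rs k), ∃ p : P, ∀ x y : Fin k → M,
      (∀ i, RelE E p (x i) (y i)) →
        (Language.Structure.RelMap (L := relLang Rs) (R : (relLang Rs).Relations k) x ↔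
          Language.Structure.RelMap (L := relLang Rs) (R : (relLang Rs).Relations k) y)) :
    IsCongruence E M where
  equivalence := ⟨fun x p => (hE p).refl x, fun h p => (hE p).symm (h p),
    fun h h' p => (hE p).trans (h p) (h' p)⟩
  relMap_iff R _ _ hxy :=
    let ⟨p, hp⟩ := htame _ R
    hp _ _ fun i => hxy i p

theorem bfEquiv_quotient_coloring_general (hM : IsCongruence E M) (hN : IsCongruence E N)
    (α : Ordinal.{0}) {n : ℕ} (a : Fin n → M) (b : Fin n → N) :
    ((∀ i j, a i = a j ↔ b i = b j) →
      BFEquiv (qLang Rs) (EPQuot E M) (EPQuot E N) α n (Quot.mk _ ∘ a) (Quot.mk _ ∘ b) →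
      BFEquiv (relLang Rs) M N α n a b) ∧
    (BFEquiv (relLang Rs) M N (Ordinal.omega0 + α) n a b →
      BFEquiv (qLang Rs) (EPQuot E M) (EPQuot E N) α n (Quot.mk _ ∘ a) (Quot.mk _ ∘ b)) :=
  ⟨hM.bfEquiv_of_bfEquiv_mk hN, hM.bfEquiv_mk_of_bfEquiv_omega0_add hN⟩

end Quotient

end TameQuot

/-- Let `T` be a tame expansion of `T_P` and `M ⊨ T`; let `N = M/E_P` be the colored
quotient structure.  Then for every `α < ω₁`: (i) if `ā`, `b̄` are tuples of pairwise
distinct elements of `M` and `(N, [ā]) ≡_α (N, [b̄])`, then `(M, ā) ≡_α (M, b̄)`; and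
(ii) if `(M, ā) ≡_{ω+α} (M, b̄)`, then `(N, [ā]) ≡_α (N, [b̄])`. -/
theorem bfEquiv_quotient_coloring
    {P : Type} [PartialOrder P] [Countable P]
    (hdf : ∀ p : P, (Set.Iic p).Finite)
    (δ : P → ℕ) (hδ : ∀ p, 2 ≤ δ p)
    {Rs : ℕ → Type} (E : P → Rs 2)
    (M : Type) [(relLang Rs).Structure M]
    (hTP : ModelsTP (· ≤ · : P → P → Prop) δ E M)
    (htame : ∀ (k : ℕ) (R : Rs k), ∃ p : P, ∀ x y : Fin k → M,
      (∀ i, RelE E p (x i) (y i)) →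
        (Language.Structure.RelMap (L := relLang Rs) (R : (relLang Rs).Relations k) x ↔
          Language.Structure.RelMap (L := relLang Rs) (R : (relLang Rs).Relations k) y))
    (α : Ordinal.{0}) (hα : α < (Cardinal.aleph 1).ord)
    (n : ℕ) (a b : Fin n → M) :
    (Function.Injective a → Function.Injective b →
      @BFEquiv (qLang Rs) (Quot (EP E)) (Quot (EP E)) (qStr Rs M (EP E)) (qStr Rs M (EP E))
        α n (fun i => Quot.mk (EP E) (a i)) (fun i => Quot.mk (EP E) (b i)) →
      BFEquiv (relLang Rs) M M α n a b) ∧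
    (BFEquiv (relLang Rs) M M (Ordinal.omega0 + α) n a b →
      @BFEquiv (qLang Rs) (Quot (EP E)) (Quot (EP E)) (qStr Rs M (EP E)) (qStr Rs M (EP E))
        α n (fun i => Quot.mk (EP E) (a i)) (fun i => Quot.mk (EP E) (b i))) := by
  have hM : IsCongruence E M := isCongruence_of_tame hTP.1 htame
  exact (bfEquiv_quotient_coloring_general hM hM α a b).imp_left
    fun h ha hb => h fun i j => by rw [ha.eq_iff, hb.eq_iff]
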